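/- Let Σ_H be positive semidefinite with eigenvalues λ_j(Σ_H) in decreasing order, let X̃_1,…,X̃_n be i.i.d. N(0, Σ_H), let P_n be the orthogonal projection onto span(X̃_1,…,X̃_n), and define R_k = Σ_{j > k} λ_j(Σ_H). Then for every k < n - 1: R_n ≤ E[Tr(Σ_H(I - P_n))] ≤ ((n-1)/(n-k-1)) · R_k. -/

import Mathlib

open Matrix MeasureTheory ProbabilityTheory BigOperators

lemma aux_gauss_laplace (t : ℝ) (ht : 0 ≤ t) :
    ∫ x, Real.exp (-t * x ^ 2) ∂(gaussianReal 0 1) = (1 + 2 * t) ^ (-(1 / 2) : ℝ) := by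
  rw [integral_gaussianReal_eq_integral_smul (by simp)]
  have h : ∀ x : ℝ, gaussianPDFReal 0 1 x • Real.exp (-t * x ^ 2)
      = (Real.sqrt (2 * Real.pi))⁻¹ * Real.exp (-(t + 1 / 2) * x ^ 2) := by
    intro x
    simp only [gaussianPDFReal, smul_eq_mul, NNReal.coe_one, mul_one, sub_zero]
    rw [mul_assoc, ← Real.exp_add]
    congr 2
    ring
  simp_rw [h]
  rw [integral_const_mul, integral_gaussian, Real.rpow_neg (by positivity), ← Real.sqrt_eq_rpow,
    ← Real.sqrt_inv, ← Real.sqrt_inv, ← Real.sqrt_mul (by positivity)]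
  congr 1
  have : (t + 1 / 2) ≠ 0 := by positivity
  have := Real.pi_ne_zero
  field_simp
  ring

lemma aux_std_laplace {E : Type*} [NormedAddCommGroup E] [InnerProductSpace ℝ E]
    [FiniteDimensional ℝ E] [MeasurableSpace E] [BorelSpace E] (t : ℝ) (ht : 0 ≤ t) :
    ∫⁻ x, ENNReal.ofReal (Real.exp (-(t * ‖x‖ ^ 2))) ∂(stdGaussian E) =
      ENNReal.ofReal ((1 + 2 * t) ^ (-((Module.finrank ℝ E : ℝ) / 2))) := by
  rw [← ofReal_integral_eq_lintegral_ofReal]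
  · congr 1
    rw [stdGaussian, integral_map (Measurable.aemeasurable (by fun_prop))
      (Continuous.aestronglyMeasurable (by fun_prop))]
    have h : ∀ x : Fin (Module.finrank ℝ E) → ℝ,
        Real.exp (-(t * ‖∑ i, x i • stdOrthonormalBasis ℝ E i‖ ^ 2)) =
          ∏ i, Real.exp (-t * x i ^ 2) := by
      intro x
      rw [← Real.exp_sum, ← Finset.mul_sum, ← real_inner_self_eq_norm_sq,
        (stdOrthonormalBasis ℝ E).orthonormal.inner_sum]
      simp [pow_two]
    simp_rw [h]
    rw [integral_fintype_prod_eq_prod (f := fun _ x => Real.exp (-t * x ^ 2))]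
    simp_rw [aux_gauss_laplace t ht]
    rw [Finset.prod_const, ← Real.rpow_natCast, ← Real.rpow_mul (by positivity)]
    simp only [Finset.card_univ, Fintype.card_fin]
    congr 1
    ring
  · refine Integrable.of_bound (Continuous.aestronglyMeasurable (by fun_prop)) 1
      (Filter.Eventually.of_forall fun x => ?_)
    rw [Real.norm_eq_abs, abs_of_pos (Real.exp_pos _), Real.exp_le_one_iff]
    have : 0 ≤ t * ‖x‖ ^ 2 := by positivity
    linarith
  · exact Filter.Eventually.of_forall fun x => (Real.exp_pos _).le

lemma aux_inv_laplace (a : ℝ) (ha : 0 ≤ a) :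
    (ENNReal.ofReal a)⁻¹ = ∫⁻ t in Set.Ioi (0 : ℝ), ENNReal.ofReal (Real.exp (-(t * a))) := by
  rcases ha.eq_or_lt with rfl | ha
  · simp
  · rw [← ofReal_integral_eq_lintegral_ofReal]
    · have := integral_exp_mul_Ioi (a := -a) (by linarith) 0
      have h2 : ∀ t : ℝ, -(t * a) = -a * t := fun t => by ring
      simp_rw [h2]
      rw [this, ← ENNReal.ofReal_inv_of_pos ha]
      congr 1
      simp [neg_div_neg_eq]
    · have h2 : ∀ t : ℝ, -(t * a) = -a * t := fun t => by ring
      simp_rw [h2]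
      exact integrableOn_exp_mul_Ioi (by linarith) 0
    · exact Filter.Eventually.of_forall fun x => (Real.exp_pos _).le

lemma aux_pow_int (s : ℝ) (hs : 2 < s) :
    ∫⁻ t in Set.Ioi (0 : ℝ), ENNReal.ofReal ((1 + 2 * t) ^ (-(s / 2))) =
      ENNReal.ofReal (1 / (s - 2)) := by
  set g : ℝ → ℝ := fun t => -((1 + 2 * t) ^ (-(s / 2 - 1)) / (s - 2)) with hg
  have hd : ∀ x ∈ Set.Ici (0 : ℝ), HasDerivAt g ((1 + 2 * x) ^ (-(s / 2))) x := by
    intro x hx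
    have hx : (0 : ℝ) ≤ x := hx
    have h1 : HasDerivAt (fun t : ℝ => 1 + 2 * t) 2 x := by
      simpa using ((hasDerivAt_id x).const_mul 2).const_add 1
    have h2 := ((h1.rpow_const (p := -(s / 2 - 1)) (Or.inl (by positivity))).div_const (s - 2)).neg
    refine h2.congr_deriv ?_
    have : s - 2 ≠ 0 := by linarith
    rw [show -(s / 2 - 1) - 1 = -(s / 2) by ring]
    field_simp
  have hp : ∀ x ∈ Set.Ioi (0 : ℝ), 0 ≤ (1 + 2 * x) ^ (-(s / 2)) := by
    intro x hx
    have hx : (0 : ℝ) < x := hx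
    positivity
  have ht : Filter.Tendsto g Filter.atTop (nhds 0) := by
    have h1 : Filter.Tendsto (fun t : ℝ => 1 + 2 * t) Filter.atTop Filter.atTop :=
      Filter.tendsto_atTop_add_const_left _ _
        (Filter.Tendsto.const_mul_atTop (by norm_num) Filter.tendsto_id)
    have h2 := ((tendsto_rpow_neg_atTop (y := s / 2 - 1) (by linarith)).comp h1).div_const (s - 2)
    simpa [hg] using h2.neg
  rw [← ofReal_integral_eq_lintegral_ofReal]
  · rw [integral_Ioi_of_hasDerivAt_of_nonneg' hd hp ht]
    simp [hg]
  · exact integrableOn_Ioi_deriv_of_nonneg' hd hp ht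
  · exact (ae_restrict_iff' measurableSet_Ioi).2 (Filter.Eventually.of_forall hp)

lemma aux_inv_moment {E : Type*} [NormedAddCommGroup E] [InnerProductSpace ℝ E]
    [FiniteDimensional ℝ E] [MeasurableSpace E] [BorelSpace E] (hE : 3 ≤ Module.finrank ℝ E) :
    ∫⁻ x, (ENNReal.ofReal (‖x‖ ^ 2))⁻¹ ∂(stdGaussian E) =
      ENNReal.ofReal (1 / ((Module.finrank ℝ E : ℝ) - 2)) := by
  have h : ∀ x : E, (ENNReal.ofReal (‖x‖ ^ 2))⁻¹ =
    ∫⁻ t in Set.Ioi (0 : ℝ), ENNReal.ofReal (Real.exp (-(t * ‖x‖ ^ 2))) :=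
    fun x => aux_inv_laplace _ (by positivity)
  simp_rw [h]
  rw [lintegral_lintegral_swap]
  · rw [← aux_pow_int _ (by exact_mod_cast hE)]
    refine setLIntegral_congr_fun measurableSet_Ioi fun t ht => ?_
    exact aux_std_laplace t (le_of_lt ht)
  · apply Measurable.aemeasurable
    unfold Function.uncurry
    fun_prop

/-- projection of the standard Gaussian -/
lemma aux_map_proj {E : Type*} [NormedAddCommGroup E] [InnerProductSpace ℝ E]
    [FiniteDimensional ℝ E] [MeasurableSpace E] [BorelSpace E] (W : Submodule ℝ E) :
    (stdGaussian E).map W.orthogonalProjectionOnto = stdGaussian W := by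
  apply Measure.ext_of_charFun
  ext t
  rw [charFun_apply, integral_map (Measurable.aemeasurable (by fun_prop))
    (Continuous.aestronglyMeasurable (by fun_prop)), charFun_stdGaussian]
  have h := charFun_stdGaussian (E := E) (t : E)
  rw [charFun_apply] at h
  rw [Submodule.coe_norm] at *
  rw [← h]
  congr 1
  ext x
  rw [Submodule.inner_orthogonalProjectionOnto_eq_of_mem_right]

lemma aux_second_moment {E : Type*} [NormedAddCommGroup E] [InnerProductSpace ℝ E]
    [FiniteDimensional ℝ E] [MeasurableSpace E] [BorelSpace E] (l : E) :
    ∫⁻ x, ENNReal.ofReal ((inner ℝ l x) ^ 2) ∂(stdGaussian E) = ENNReal.ofReal (‖l‖ ^ 2) := by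
  have h := variance_dual_stdGaussian (E := E) (innerSL ℝ l)
  have hm : MemLp (innerSL ℝ l) 2 (stdGaussian E) := IsGaussian.memLp_dual _ _ _ (by simp)
  rw [variance_of_integral_eq_zero (by fun_prop) (integral_strongDual_stdGaussian _), innerSL_apply_norm] at h
  rw [← h, ofReal_integral_eq_lintegral_ofReal hm.integrable_sq
    (Filter.Eventually.of_forall fun x => sq_nonneg _)]
  simp

noncomputable def auxF {n d : ℕ} (lam : Fin d → ℝ) (j : Fin d)
    (Y : Fin d → EuclideanSpace ℝ (Fin n)) : ENNReal :=
  ⨅ l : EuclideanSpace ℝ (Fin n),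
    ENNReal.ofReal (∑ c, ((if c = j then 1 else 0) - Real.sqrt (lam c) * inner ℝ l (Y c)) ^ 2)

lemma auxF_measurable {n d : ℕ} (lam : Fin d → ℝ) (j : Fin d) :
    Measurable (auxF (n := n) lam j) := by
  apply UpperSemicontinuous.measurable
  apply upperSemicontinuous_iInf
  intro l
  apply Continuous.upperSemicontinuous
  exact ENNReal.continuous_ofReal.comp (by fun_prop)

lemma auxF_inner {n d : ℕ} (lam : Fin d → ℝ) (hlam : ∀ c, 0 ≤ lam c) (S : Finset (Fin d))
    (j : Fin d) (hj : j ∈ S) (x : Fin d → EuclideanSpace ℝ (Fin n))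
    (l : EuclideanSpace ℝ (Fin n)) (hlj : Real.sqrt (lam j) * inner ℝ l (x j) = 1)
    (hl : ∀ c ∈ S.erase j, inner ℝ l (x c) = 0) :
    (lmarginal (fun _ => stdGaussian (EuclideanSpace ℝ (Fin n))) Sᶜ (auxF lam j)) x ≤
      ENNReal.ofReal ((∑ c ∈ Sᶜ, lam c) * ‖l‖ ^ 2) := by
  unfold lmarginal
  calc _ ≤ ∫⁻ y : (∀ i : (Sᶜ : Finset (Fin d)), EuclideanSpace ℝ (Fin n)),
        ∑ c : (Sᶜ : Finset (Fin d)), ENNReal.ofReal (lam c) *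
          ENNReal.ofReal ((inner ℝ l (y c)) ^ 2)
          ∂(Measure.pi fun _ => stdGaussian (EuclideanSpace ℝ (Fin n))) := by
        refine lintegral_mono fun y => ?_
        refine (iInf_le _ l).trans (le_of_eq ?_)
        simp_rw [← ENNReal.ofReal_mul (hlam _)]
        rw [← ENNReal.ofReal_sum_of_nonneg (fun c _ => mul_nonneg (hlam _) (sq_nonneg _))]
        congr 1
        rw [← Finset.sum_add_sum_compl S]
        have h0 : ∑ c ∈ S, ((if c = j then 1 else 0) - Real.sqrt (lam c) *
            inner ℝ l (Function.updateFinset x Sᶜ y c)) ^ 2 = 0 := by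
          apply Finset.sum_eq_zero
          intro c hc
          have : c ∉ Sᶜ := by simpa using hc
          rw [Function.updateFinset_def]
          simp only [this, dite_false]
          split_ifs with h
          · subst h; rw [hlj]; simp
          · rw [hl c (by simp [h, hc])]; simp
        rw [h0, zero_add, ← Finset.sum_coe_sort (Sᶜ)]
        refine Finset.sum_congr rfl fun c _ => ?_
        have hc : (c : Fin d) ∈ Sᶜ := c.2
        have hcj : (c : Fin d) ≠ j := by
          rintro h
          rw [h] at hc
          simp [hj] at hc
        rw [Function.updateFinset_def]
        simp only [hc, dite_true, hcj, if_false]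
        rw [zero_sub, neg_sq, mul_pow, Real.sq_sqrt (hlam _)]
    _ = _ := by
        rw [lintegral_finsetSum _ (fun c _ => by fun_prop)]
        have h1 : ∀ c : (Sᶜ : Finset (Fin d)),
            ∫⁻ y : (∀ i : (Sᶜ : Finset (Fin d)), EuclideanSpace ℝ (Fin n)),
              ENNReal.ofReal (lam c) * ENNReal.ofReal ((inner ℝ l (y c)) ^ 2)
              ∂(Measure.pi fun _ => stdGaussian (EuclideanSpace ℝ (Fin n)))
            = ENNReal.ofReal (lam c * ‖l‖ ^ 2) := by
          intro c
          rw [lintegral_const_mul _ (by fun_prop), ENNReal.ofReal_mul (hlam _),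
            ← aux_second_moment l]
          congr 1
          exact (measurePreserving_eval
            (fun _ : (Sᶜ : Finset (Fin d)) => stdGaussian (EuclideanSpace ℝ (Fin n))) c).lintegral_comp
            (f := fun z => ENNReal.ofReal ((inner ℝ l z) ^ 2)) (by fun_prop)
        simp_rw [h1]
        rw [← ENNReal.ofReal_sum_of_nonneg (fun c _ => mul_nonneg (hlam _) (sq_nonneg _)),
          Finset.sum_mul, ← Finset.sum_coe_sort (Sᶜ)]

lemma auxF_core {n d : ℕ} (lam : Fin d → ℝ) (hlam : ∀ c, 0 ≤ lam c) (S : Finset (Fin d))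
    (j : Fin d) (hj : j ∈ S) (hpos : 0 < lam j) (hS : S.card + 1 < n) :
    ∫⁻ x, auxF lam j x ∂(Measure.pi fun _ : Fin d => stdGaussian (EuclideanSpace ℝ (Fin n))) ≤
      ENNReal.ofReal ((∑ c ∈ Sᶜ, lam c) / lam j * (1 / ((n : ℝ) - S.card - 1))) := by
  set E := EuclideanSpace ℝ (Fin n) with hE
  have hRt : 0 ≤ ∑ c ∈ Sᶜ, lam c := Finset.sum_nonneg fun c _ => hlam c
  have hu : (Finset.univ : Finset (Fin d)) = S.erase j ∪ insert j Sᶜ := by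
    ext c
    by_cases hc : c ∈ S <;> by_cases hcj : c = j <;> simp [hc, hcj]
  have hdisj : Disjoint (S.erase j) (insert j Sᶜ) := by
    rw [Finset.disjoint_left]
    intro c hc
    simp at hc ⊢
    exact hc
  have key : ∀ x : Fin d → E, (lmarginal (fun _ => stdGaussian E) (insert j Sᶜ) (auxF lam j)) x ≤
      ENNReal.ofReal ((∑ c ∈ Sᶜ, lam c) / lam j * (1 / ((n : ℝ) - S.card - 1))) := by
    intro x
    rw [lmarginal_insert _ (auxF_measurable lam j) (by simp [hj])]
    set W : Submodule ℝ E := Submodule.span ℝ (((S.erase j).image x : Finset E) : Set E) with hW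
    have hWr : Module.finrank ℝ W ≤ S.card - 1 := by
      refine (finrank_span_finset_le_card _).trans ?_
      refine Finset.card_image_le.trans ?_
      rw [Finset.card_erase_of_mem hj]
    have hc1 : 1 ≤ S.card := Finset.card_pos.2 ⟨j, hj⟩
    have hsum := W.finrank_add_finrank_orthogonal
    have hEn : Module.finrank ℝ E = n := finrank_euclideanSpace_fin
    rw [hEn] at hsum
    have hr3 : n + 1 ≤ Module.finrank ℝ Wᗮ + S.card := by omega
    have hm := aux_inv_moment (E := Wᗮ) (by omega)
    rw [← aux_map_proj Wᗮ, lintegral_map (by fun_prop) (by fun_prop)] at hm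
    have hae : ∀ᵐ z ∂(stdGaussian E),
        (ENNReal.ofReal (‖Wᗮ.orthogonalProjectionOnto z‖ ^ 2))⁻¹ < ⊤ :=
      ae_lt_top (by fun_prop) (by rw [hm]; exact ENNReal.ofReal_ne_top)
    calc _ ≤ ∫⁻ z, ENNReal.ofReal ((∑ c ∈ Sᶜ, lam c) / lam j) *
            (ENNReal.ofReal (‖Wᗮ.orthogonalProjectionOnto z‖ ^ 2))⁻¹ ∂(stdGaussian E) := by
          refine lintegral_mono_ae ?_
          filter_upwards [hae] with z hz
          set p : E := (Wᗮ.orthogonalProjectionOnto z : E) with hp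
          have hpn : ‖Wᗮ.orthogonalProjectionOnto z‖ = ‖p‖ := rfl
          replace hz : (ENNReal.ofReal (‖Wᗮ.orthogonalProjectionOnto z‖ ^ 2))⁻¹ < ⊤ := hz
          rw [hpn] at hz ⊢
          have hp0 : 0 < ‖p‖ ^ 2 := by
            rw [ENNReal.inv_lt_top, ENNReal.ofReal_pos] at hz
            exact hz
          have hpz : inner ℝ p z = ‖p‖ ^ 2 := by
            have := Submodule.inner_orthogonalProjectionOnto_eq_of_mem_left
              (Wᗮ.orthogonalProjectionOnto z) z
            rw [← this, Submodule.coe_inner, real_inner_self_eq_norm_sq]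
          have hs : 0 < Real.sqrt (lam j) := Real.sqrt_pos.2 hpos
          have := auxF_inner lam hlam S j hj (Function.update x j z)
            ((Real.sqrt (lam j) * ‖p‖ ^ 2)⁻¹ • p) (by
              rw [Function.update_self, real_inner_smul_left, hpz]
              have hpne : ‖p‖ ≠ 0 := by
                intro h0
                rw [h0] at hp0
                norm_num at hp0
              field_simp) (by
              intro c hc
              rw [Function.update_of_ne (Finset.ne_of_mem_erase hc), real_inner_smul_left]
              have h1 : x c ∈ W := Submodule.subset_span (by
                rw [Finset.coe_image]
                exact ⟨c, hc, rfl⟩)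
              rw [Submodule.inner_left_of_mem_orthogonal h1 (Wᗮ.orthogonalProjectionOnto z).2,
                mul_zero])
          refine this.trans (le_of_eq ?_)
          rw [← ENNReal.ofReal_inv_of_pos hp0, ← ENNReal.ofReal_mul (by positivity)]
          congr 1
          rw [norm_smul, mul_pow, Real.norm_eq_abs, sq_abs, inv_pow, mul_pow,
            Real.sq_sqrt hpos.le]
          field_simp
      _ = ENNReal.ofReal ((∑ c ∈ Sᶜ, lam c) / lam j) *
            ENNReal.ofReal (1 / ((Module.finrank ℝ Wᗮ : ℝ) - 2)) := by
          rw [lintegral_const_mul _ (by fun_prop), hm]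
      _ ≤ _ := by
          rw [← ENNReal.ofReal_mul (by positivity)]
          apply ENNReal.ofReal_le_ofReal
          apply mul_le_mul_of_nonneg_left _ (by positivity)
          have h1 : ((n : ℝ) + 1) ≤ Module.finrank ℝ Wᗮ + S.card := by exact_mod_cast hr3
          have h2 : (S.card : ℝ) + 1 < n := by exact_mod_cast hS
          apply one_div_le_one_div_of_le <;> linarith
  rw [lintegral_eq_lmarginal_univ (fun _ => 0), hu,
    lmarginal_union _ _ (auxF_measurable lam j) hdisj]
  refine (lmarginal_mono (g := fun _ => _) (fun x => key x) _).trans ?_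
  unfold lmarginal
  simp

lemma aux_law (n d : ℕ)
    {Ω : Type*} [MeasurableSpace Ω] (μ : Measure Ω) [IsProbabilityMeasure μ]
    (SigH : Matrix (Fin d) (Fin d) ℝ)
    (eig : Fin d → ℝ) (hnn : ∀ c, 0 ≤ eig c)
    (U : Matrix (Fin d) (Fin d) ℝ) (hU : Uᵀ * U = 1)
    (hdecomp : SigH = U * Matrix.diagonal eig * Uᵀ)
    (Xt : Fin n → Ω → (Fin d → ℝ)) (hXtmeas : ∀ i, Measurable (Xt i))
    (hgauss : ∀ v : Fin n → (Fin d → ℝ),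
      μ.map (fun ω => ∑ i, v i ⬝ᵥ Xt i ω) =
        gaussianReal 0 (Real.toNNReal (∑ i, v i ⬝ᵥ SigH.mulVec (v i))))
    (Y : Ω → Fin d → EuclideanSpace ℝ (Fin n))
    (hY : ∀ ω c i, Y ω c i = (Uᵀ *ᵥ Xt i ω) c) :
    Measurable Y ∧ μ.map Y = (Measure.pi fun _ : Fin d => stdGaussian (EuclideanSpace ℝ (Fin n))).map
      (fun Z c => Real.sqrt (eig c) • Z c) := by
  have hYm : Measurable Y := by
    have : Y = fun ω c => WithLp.toLp 2 (fun i => (Uᵀ *ᵥ Xt i ω) c) := by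
      ext ω c i
      exact hY ω c i
    rw [this]
    refine measurable_pi_lambda _ fun c => ?_
    refine (WithLp.measurable_toLp 2 _).comp (measurable_pi_lambda _ fun i => ?_)
    simp only [Matrix.mulVec, dotProduct]
    fun_prop
  refine ⟨hYm, ?_⟩
  have hP : IsProbabilityMeasure (μ.map Y) := Measure.isProbabilityMeasure_map hYm.aemeasurable
  have hP2 : ∀ c, IsProbabilityMeasure ((stdGaussian (EuclideanSpace ℝ (Fin n))).map
      (fun z => Real.sqrt (eig c) • z)) := fun c =>
    Measure.isProbabilityMeasure_map (by fun_prop)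
  rw [Measure.pi_map_pi (f := fun c z => Real.sqrt (eig c) • z) (fun c => by fun_prop),
    ← charFun_eq_pi_iff]
  intro t
  simp_rw [charFun_map_smul, charFun_stdGaussian]
  set v : Fin n → Fin d → ℝ := fun i => U *ᵥ (fun c => t c i) with hv
  have hsq : ∑ i, v i ⬝ᵥ SigH.mulVec (v i) = ∑ c, eig c * ‖t c‖ ^ 2 := by
    have h1 : ∀ i, v i ⬝ᵥ SigH.mulVec (v i) = ∑ c, eig c * (t c i) ^ 2 := by
      intro i
      rw [hdecomp, hv]
      simp only [← Matrix.mulVec_mulVec]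
      rw [Matrix.dotProduct_mulVec, Matrix.vecMul_mulVec, Matrix.mulVec_mulVec _ Uᵀ U, hU,
        Matrix.one_mulVec]
      simp [hU, dotProduct, Matrix.mulVec_diagonal]
      refine Finset.sum_congr rfl fun c _ => by ring
    simp_rw [h1]
    rw [Finset.sum_comm]
    refine Finset.sum_congr rfl fun c _ => ?_
    rw [EuclideanSpace.real_norm_sq_eq, Finset.mul_sum]
  have h := congrArg (fun ν => charFun ν 1) (hgauss v)
  simp only [charFun_gaussianReal] at h
  rw [charFun_apply, integral_map (Measurable.aemeasurable (by
    simp only [dotProduct]; fun_prop)) (Continuous.aestronglyMeasurable (by fun_prop))] at h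
  rw [charFun_apply, integral_map (Measurable.aemeasurable (by fun_prop))
    (Continuous.aestronglyMeasurable (by fun_prop)), integral_map hYm.aemeasurable
    (Measurable.aestronglyMeasurable (by fun_prop))]
  have hin : ∀ ω, inner ℝ (WithLp.toLp 2 (Y ω)) t = inner ℝ (∑ i, v i ⬝ᵥ Xt i ω) (1 : ℝ) := by
    intro ω
    simp only [PiLp.inner_apply]
    rw [Finset.sum_comm]
    simp only [hY, hv, RCLike.inner_apply, conj_trivial, one_mul, mul_one]
    refine Finset.sum_congr rfl fun i _ => ?_
    rw [dotProduct_comm, Matrix.dotProduct_mulVec, ← Matrix.mulVec_transpose, dotProduct]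
    refine Finset.sum_congr rfl fun c _ => by ring
  simp_rw [hin]
  rw [h, hsq, ← Complex.exp_sum]
  congr 1
  rw [Real.coe_toNNReal _ (Finset.sum_nonneg fun c _ => mul_nonneg (hnn c) (sq_nonneg _))]
  have hns : ∀ c, ((‖Real.sqrt (eig c) • t c‖ : ℝ) : ℂ) ^ 2 = ((eig c * ‖t c‖ ^ 2 : ℝ) : ℂ) := by
    intro c
    rw [← Complex.ofReal_pow, norm_smul, mul_pow, Real.norm_eq_abs, sq_abs, Real.sq_sqrt (hnn c)]
  simp_rw [hns]
  rw [← Finset.sum_div, Finset.sum_neg_distrib]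
  push_cast
  ring

lemma aux_quad_nonneg {d : ℕ} (N : Matrix (Fin d) (Fin d) ℝ) (h1 : N * N = N) (h2 : Nᵀ = N)
    (w : Fin d → ℝ) : 0 ≤ w ⬝ᵥ N *ᵥ w := by
  have : w ⬝ᵥ N *ᵥ w = (N *ᵥ w) ⬝ᵥ (N *ᵥ w) := by
    rw [Matrix.dotProduct_mulVec (N *ᵥ w), ← Matrix.mulVec_transpose, h2, Matrix.mulVec_mulVec, h1,
      dotProduct_comm]
  rw [this]
  exact Finset.sum_nonneg fun i _ => mul_self_nonneg _

lemma aux_quad_le {d : ℕ} (N : Matrix (Fin d) (Fin d) ℝ) (h1 : N * N = N) (h2 : Nᵀ = N)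
    (w : Fin d → ℝ) : w ⬝ᵥ N *ᵥ w ≤ w ⬝ᵥ w := by
  have := aux_quad_nonneg (1 - N) (by simp [sub_mul, mul_sub, h1]) (by simp [h2]) w
  rw [Matrix.sub_mulVec, Matrix.one_mulVec, dotProduct_sub] at this
  linarith

lemma aux_diag {d : ℕ} (N : Matrix (Fin d) (Fin d) ℝ) (c : Fin d) :
    N c c = (Pi.single c 1) ⬝ᵥ N *ᵥ (Pi.single c 1) := by
  simp

lemma aux_diag_le {d n : ℕ} (N : Matrix (Fin d) (Fin d) ℝ) (h1 : N * N = N) (h2 : Nᵀ = N)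
    (y : Fin n → Fin d → ℝ) (hy : ∀ i, N *ᵥ y i = 0) (j : Fin d) (l : Fin n → ℝ) :
    N j j ≤ ∑ c, ((if c = j then 1 else 0) - ∑ i, l i * y i c) ^ 2 := by
  set u : Fin d → ℝ := ∑ i, l i • y i with hu
  have hNu : N *ᵥ u = 0 := by
    rw [hu, Matrix.mulVec_sum]
    simp [Matrix.mulVec_smul, hy]
  have h := aux_quad_le N h1 h2 (Pi.single j 1 - u)
  have h3 : (Pi.single j 1 - u) ⬝ᵥ N *ᵥ (Pi.single j 1 - u) = N j j := by
    rw [Matrix.mulVec_sub, hNu, sub_zero, sub_dotProduct, Matrix.dotProduct_mulVec u,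
      ← Matrix.mulVec_transpose, h2, hNu, ← aux_diag]
    simp
  rw [h3] at h
  refine h.trans (le_of_eq ?_)
  simp only [dotProduct]
  refine Finset.sum_congr rfl fun c _ => ?_
  simp [hu, Finset.sum_apply, Pi.single_apply, pow_two]

lemma aux_trace_le {d n : ℕ} (P : Matrix (Fin d) (Fin d) ℝ) (hP : P * P = P)
    (x : Fin n → Fin d → ℝ)
    (hr : ∀ z : Fin d → ℝ, (∃ l : Fin n → ℝ, z = ∑ i, l i • x i) ↔ P.mulVec z = z) :
    P.trace ≤ n := by
  have hproj : LinearMap.IsProj (Submodule.span ℝ (Set.range x)) P.toLin' := by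
    constructor
    · intro z
      have := (hr (P *ᵥ z)).2 (by rw [Matrix.mulVec_mulVec, hP])
      rw [Submodule.mem_span_range_iff_exists_fun]
      obtain ⟨l, hl⟩ := this
      exact ⟨l, by rw [← hl]; rfl⟩
    · intro z hz
      rw [Submodule.mem_span_range_iff_exists_fun] at hz
      obtain ⟨l, hl⟩ := hz
      exact (hr z).1 ⟨l, hl.symm⟩
  have := hproj.trace
  rw [Matrix.trace_toLin'_eq] at this
  rw [this]
  have := finrank_range_le_card (R := ℝ) x
  rw [Fintype.card_fin] at this
  exact_mod_cast this

lemma aux_weights {d : ℕ} (n : ℕ) (eig q : Fin d → ℝ) (hnn : ∀ c, 0 ≤ eig c)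
    (heig : ∀ i j : Fin d, i ≤ j → eig j ≤ eig i) (hq0 : ∀ c, 0 ≤ q c) (hq1 : ∀ c, q c ≤ 1)
    (hs : (d : ℝ) - n ≤ ∑ c, q c) :
    ∑ j ∈ Finset.univ.filter (fun j : Fin d => n ≤ (j : ℕ)), eig j ≤ ∑ c, eig c * q c := by
  rcases lt_or_ge n d with hnd | hnd
  · set a := eig ⟨n, hnd⟩ with ha
    have key : ∀ c : Fin d, (if n ≤ (c : ℕ) then eig c else 0) - eig c * q c ≤
        a * ((if n ≤ (c : ℕ) then 1 else 0) - q c) := by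
      intro c
      split_ifs with h
      · have : eig c ≤ a := heig _ _ h
        nlinarith [hq1 c]
      · have : a ≤ eig c := heig _ _ (by rw [Fin.le_def]; simp; omega)
        nlinarith [hq0 c]
    have hsum := Finset.sum_le_sum (fun c (_ : c ∈ Finset.univ) => key c)
    rw [Finset.sum_sub_distrib, ← Finset.mul_sum, Finset.sum_sub_distrib] at hsum
    have hcard : ∑ c : Fin d, (if n ≤ (c : ℕ) then (1 : ℝ) else 0) = d - n := by
      rw [Fin.sum_univ_eq_sum_range (fun c => if n ≤ c then (1 : ℝ) else 0) d,
        ← Finset.sum_range_add_sum_Ico _ hnd.le]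
      rw [Finset.sum_eq_zero, Finset.sum_congr rfl (g := fun _ => (1 : ℝ))]
      · simp [Nat.cast_sub hnd.le]
      · intro c hc; simp [(Finset.mem_Ico.1 hc).1]
      · intro c hc; simp [Finset.mem_range.1 hc]
    rw [hcard] at hsum
    rw [Finset.sum_filter]
    have := hnn ⟨n, hnd⟩
    nlinarith
  · rw [Finset.filter_false_of_mem, Finset.sum_empty]
    · exact Finset.sum_nonneg fun c _ => mul_nonneg (hnn c) (hq0 c)
    · intro c _; have := c.2; omega

/-- **Two-sided bounds on the noiseless optimal risk.** Let `Σ_H ⪰ 0` with eigenvalues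
`eig 0 ≥ eig 1 ≥ …` (eigendecomposition with orthogonal `U`), let `X̃₁,…,X̃ₙ` be i.i.d.
`N(0, Σ_H)` (characterized through joint linear marginals), and let `P_n(ω)` be the
orthogonal projection onto `span(X̃₁(ω),…,X̃ₙ(ω))`. With `R_k = Σ_{j ≥ k} eig j`
(0-indexed tails, corresponding to `Σ_{j > k} λ_j` in 1-indexed notation), for every
`k` with `k + 1 < n`: `R_n ≤ E[Tr(Σ_H(I - P_n))] ≤ ((n-1)/(n-k-1)) R_k`. -/
theorem noiseless_risk_two_sided (n d : ℕ) (hn : 0 < n)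
    {Ω : Type*} [MeasurableSpace Ω] (μ : Measure Ω) [IsProbabilityMeasure μ]
    (SigH : Matrix (Fin d) (Fin d) ℝ) (hSigH : SigH.PosSemidef)
    (eig : Fin d → ℝ) (heig : ∀ i j : Fin d, i ≤ j → eig j ≤ eig i)
    (U : Matrix (Fin d) (Fin d) ℝ) (hU : Uᵀ * U = 1)
    (hdecomp : SigH = U * Matrix.diagonal eig * Uᵀ)
    (Xt : Fin n → Ω → (Fin d → ℝ)) (hXtmeas : ∀ i, Measurable (Xt i))
    (hgauss : ∀ v : Fin n → (Fin d → ℝ),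
      μ.map (fun ω => ∑ i, v i ⬝ᵥ Xt i ω) =
        gaussianReal 0 (Real.toNNReal (∑ i, v i ⬝ᵥ SigH.mulVec (v i))))
    (P : Ω → Matrix (Fin d) (Fin d) ℝ)
    (hPidem : ∀ ω, P ω * P ω = P ω) (hPsymm : ∀ ω, (P ω)ᵀ = P ω)
    (hPrange : ∀ ω (z : Fin d → ℝ),
      (∃ l : Fin n → ℝ, z = ∑ i, l i • Xt i ω) ↔ (P ω).mulVec z = z)
    (R : ℕ → ℝ)
    (hR : ∀ k : ℕ, R k = ∑ j ∈ Finset.univ.filter (fun j : Fin d => k ≤ (j : ℕ)), eig j)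
    (hint : Integrable
      (fun ω => (SigH * ((1 : Matrix (Fin d) (Fin d) ℝ) - P ω)).trace) μ) :
    ∀ k : ℕ, k + 1 < n →
      R n ≤ (∫ ω, (SigH * ((1 : Matrix (Fin d) (Fin d) ℝ) - P ω)).trace ∂μ) ∧
      (∫ ω, (SigH * ((1 : Matrix (Fin d) (Fin d) ℝ) - P ω)).trace ∂μ) ≤
        (((n : ℝ) - 1) / ((n : ℝ) - (k : ℝ) - 1)) * R k := by
  have hUU : U * Uᵀ = 1 := mul_eq_one_comm.1 hU
  have hnn : ∀ c, 0 ≤ eig c := by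
    have h1 : Matrix.diagonal eig = Uᵀ * SigH * U := by
      rw [hdecomp]
      simp only [Matrix.mul_assoc, hU, Matrix.mul_one]
      rw [← Matrix.mul_assoc, hU, Matrix.one_mul]
    have h2 := hSigH.conjTranspose_mul_mul_same U
    rw [Matrix.conjTranspose_eq_transpose_of_trivial, ← h1] at h2
    exact Matrix.posSemidef_diagonal_iff.1 h2
  set N : Ω → Matrix (Fin d) (Fin d) ℝ := fun ω => Uᵀ * (1 - P ω) * U with hN
  have hN1 : ∀ ω, N ω * N ω = N ω := by
    intro ω
    have h1 : (1 - P ω) * (1 - P ω) = 1 - P ω := by simp [sub_mul, mul_sub, hPidem]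
    calc N ω * N ω = Uᵀ * (1 - P ω) * (U * Uᵀ) * (1 - P ω) * U := by
          simp only [hN, Matrix.mul_assoc]
      _ = Uᵀ * ((1 - P ω) * (1 - P ω)) * U := by
          rw [hUU, Matrix.mul_one, Matrix.mul_assoc Uᵀ]
      _ = N ω := by rw [h1]
  have hN2 : ∀ ω, (N ω)ᵀ = N ω := by
    intro ω
    simp [hN, Matrix.transpose_mul, hPsymm, Matrix.mul_assoc]
  have htr : ∀ ω, (SigH * ((1 : Matrix (Fin d) (Fin d) ℝ) - P ω)).trace =
      ∑ c, eig c * N ω c c := by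
    intro ω
    rw [hdecomp, Matrix.mul_assoc, Matrix.mul_assoc, Matrix.trace_mul_comm, Matrix.mul_assoc]
    change (Matrix.diagonal eig * N ω).trace = _
    simp [Matrix.trace, Matrix.diagonal_mul]
  have hq0 : ∀ ω c, 0 ≤ N ω c c := by
    intro ω c
    rw [aux_diag (N ω) c]
    exact aux_quad_nonneg _ (hN1 ω) (hN2 ω) _
  have hq1 : ∀ ω c, N ω c c ≤ 1 := by
    intro ω c
    rw [aux_diag (N ω) c]
    refine (aux_quad_le _ (hN1 ω) (hN2 ω) _).trans ?_
    simp
  have htrN : ∀ ω, (d : ℝ) - n ≤ ∑ c, N ω c c := by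
    intro ω
    have h1 : ∑ c, N ω c c = (d : ℝ) - (P ω).trace := by
      change (N ω).trace = _
      simp only [hN]
      rw [Matrix.trace_mul_comm, ← Matrix.mul_assoc, hUU, Matrix.one_mul, Matrix.trace_sub,
        Matrix.trace_one, Fintype.card_fin]
    have h2 := aux_trace_le (P ω) (hPidem ω) (fun i => Xt i ω) (hPrange ω)
    rw [h1]
    linarith
  have hlow : ∀ m : ℕ, 0 ≤ R m := by
    intro m
    rw [hR]
    exact Finset.sum_nonneg fun c _ => hnn c
  intro k hk
  constructor
  · have h1 : R n = ∫ _ω, R n ∂μ := by simp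
    rw [h1]
    refine integral_mono (integrable_const _) hint fun ω => ?_
    simp only [htr]
    rw [hR]
    exact aux_weights n eig _ hnn heig (hq0 ω) (hq1 ω) (htrN ω)
  · set S : Finset (Fin d) := Finset.univ.filter (fun j => (j : ℕ) < k ∧ 0 < eig j) with hSdef
    have hScard : S.card ≤ k := by
      have h1 : S.card ≤ (Finset.range k).card := by
        refine Finset.card_le_card_of_injOn (fun j : Fin d => (j : ℕ)) ?_
          (fun a _ b _ h => Fin.ext h)
        intro j hj
        simp only [hSdef, Finset.coe_filter, Set.mem_ofPred_eq] at hj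
        simpa using hj.2.1
      simpa using h1
    have hSn : S.card + 1 < n := by omega
    have hSsum : ∑ c ∈ Sᶜ, eig c = R k := by
      rw [hR]
      symm
      apply Finset.sum_subset
      · intro c hc
        simp [hSdef] at hc ⊢
        intro h
        omega
      · intro c hc hc2
        simp [hSdef] at hc hc2
        exact le_antisymm (hc hc2) (hnn c)
    set Y : Ω → Fin d → EuclideanSpace ℝ (Fin n) :=
      fun ω c => WithLp.toLp 2 (fun i => (Uᵀ *ᵥ Xt i ω) c) with hYdef
    obtain ⟨hYm, hYlaw⟩ := aux_law n d μ SigH eig hnn U hU hdecomp Xt hXtmeas hgauss Y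
      (fun ω c i => rfl)
    have hqle : ∀ ω j, ENNReal.ofReal (N ω j j) ≤ auxF (fun _ => 1) j (Y ω) := by
      intro ω j
      refine le_iInf fun l => ENNReal.ofReal_le_ofReal ?_
      refine (aux_diag_le (N ω) (hN1 ω) (hN2 ω) (fun i => Uᵀ *ᵥ Xt i ω) ?_ j l).trans
        (le_of_eq ?_)
      · intro i
        have h1 : P ω *ᵥ Xt i ω = Xt i ω := by
          refine (hPrange ω _).1 ⟨Pi.single i 1, ?_⟩
          rw [Finset.sum_eq_single i]
          · simp
          · intro b _ hb; simp [Pi.single_eq_of_ne hb]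
          · simp
        simp only [hN]
        rw [Matrix.mulVec_mulVec, Matrix.mul_assoc, hUU, Matrix.mul_one, ← Matrix.mulVec_mulVec,
          Matrix.sub_mulVec, Matrix.one_mulVec, h1, sub_self, Matrix.mulVec_zero]
      · refine Finset.sum_congr rfl fun c _ => ?_
        simp [hYdef, PiLp.inner_apply, mul_comm]
    have hFint : ∀ j, ∫⁻ ω, auxF (fun _ => 1) j (Y ω) ∂μ =
        ∫⁻ x, auxF eig j x
          ∂(Measure.pi fun _ : Fin d => stdGaussian (EuclideanSpace ℝ (Fin n))) := by
      intro j
      rw [← lintegral_map (auxF_measurable _ j) hYm, hYlaw,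
        lintegral_map (auxF_measurable _ j) (by fun_prop)]
      refine lintegral_congr fun x => ?_
      simp [auxF, inner_smul_right]
    have hkn : (k : ℝ) + 1 < n := by exact_mod_cast hk
    have hSk : (S.card : ℝ) ≤ k := by exact_mod_cast hScard
    have hRk := hlow k
    have hn1 : (0 : ℝ) < (n : ℝ) - S.card - 1 := by linarith
    have hn2 : (0 : ℝ) < (n : ℝ) - k - 1 := by linarith
    have hbound : R k + S.card * (R k * (1 / ((n : ℝ) - S.card - 1))) ≤
        (((n : ℝ) - 1) / ((n : ℝ) - (k : ℝ) - 1)) * R k := by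
      have h1 : ((n : ℝ) - 1) / ((n : ℝ) - (k : ℝ) - 1) =
          1 + k * (1 / ((n : ℝ) - k - 1)) := by
        field_simp
        ring
      rw [h1]
      have h2 : (S.card : ℝ) * (1 / ((n : ℝ) - S.card - 1)) ≤ k * (1 / ((n : ℝ) - k - 1)) := by
        apply mul_le_mul hSk _ (by positivity) (by positivity)
        apply one_div_le_one_div_of_le hn2
        linarith
      nlinarith [mul_le_mul_of_nonneg_left h2 hRk]
    have hbn : 0 ≤ R k + S.card * (R k * (1 / ((n : ℝ) - S.card - 1))) := by positivity
    rw [integral_eq_lintegral_of_nonneg_ae (Filter.Eventually.of_forall fun ω => by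
      simp only [htr]
      exact Finset.sum_nonneg fun c _ => mul_nonneg (hnn c) (hq0 ω c)) hint.aestronglyMeasurable]
    refine ENNReal.toReal_le_of_le_ofReal (hbn.trans hbound) ?_
    refine le_trans ?_ (ENNReal.ofReal_le_ofReal hbound)
    calc ∫⁻ ω, ENNReal.ofReal ((SigH * ((1 : Matrix (Fin d) (Fin d) ℝ) - P ω)).trace) ∂μ
        ≤ ∫⁻ ω, (ENNReal.ofReal (R k) +
            ∑ j ∈ S, ENNReal.ofReal (eig j) * auxF (fun _ => 1) j (Y ω)) ∂μ := by
          refine lintegral_mono fun ω => ?_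
          rw [htr, ← Finset.sum_add_sum_compl S, add_comm]
          refine ENNReal.ofReal_add_le.trans (add_le_add ?_ ?_)
          · apply ENNReal.ofReal_le_ofReal
            rw [← hSsum]
            exact Finset.sum_le_sum fun c _ => mul_le_of_le_one_right (hnn c) (hq1 ω c)
          · rw [ENNReal.ofReal_sum_of_nonneg (fun c _ => mul_nonneg (hnn c) (hq0 ω c))]
            refine Finset.sum_le_sum fun c _ => ?_
            rw [ENNReal.ofReal_mul (hnn c)]
            exact mul_le_mul_right (hqle ω c) _
      _ = ENNReal.ofReal (R k) + ∑ j ∈ S, ENNReal.ofReal (eig j) *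
            ∫⁻ ω, auxF (fun _ => 1) j (Y ω) ∂μ := by
          have hm : ∀ j, Measurable fun ω => auxF (fun _ => 1) j (Y ω) :=
            fun j => (auxF_measurable _ j).comp hYm
          rw [lintegral_add_left measurable_const,
            lintegral_finsetSum _ (fun j _ => (hm j).const_mul _)]
          simp only [lintegral_const, measure_univ, mul_one]
          congr 1
          exact Finset.sum_congr rfl fun j _ => lintegral_const_mul _ (hm j)
      _ ≤ ENNReal.ofReal (R k) +
            ∑ j ∈ S, ENNReal.ofReal (R k * (1 / ((n : ℝ) - S.card - 1))) := by
          refine add_le_add le_rfl (Finset.sum_le_sum fun j hj => ?_)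
          have hjp : 0 < eig j := by
            simp only [hSdef, Finset.mem_filter] at hj
            exact hj.2.2
          rw [hFint]
          refine (mul_le_mul_right (auxF_core eig hnn S j hj hjp hSn) _).trans (le_of_eq ?_)
          rw [← ENNReal.ofReal_mul (hnn j), hSsum]
          congr 1
          field_simp
      _ = _ := by
          rw [← ENNReal.ofReal_sum_of_nonneg (fun c _ => by positivity),
            ← ENNReal.ofReal_add hRk (Finset.sum_nonneg fun c _ => by positivity),
            Finset.sum_const, nsmul_eq_mul]
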